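/- Let A and B be invertible 3×3 real matrices admitting proximal decompositions A = L₁·p₁ + L₂·p₂ + L₃·p₃ and B = M₁·q₁ + M₂·q₂ + M₃·q₃, and suppose tr(p₁·q₁) ≠ 0 and tr(p₃·q₃) ≠ 0. Then the sequence (λ₁(AⁿBⁿ)/λ₃(AⁿBⁿ)) · (λ₃(Aⁿ)/λ₁(Aⁿ)) · (λ₃(Bⁿ)/λ₁(Bⁿ)) converges, as n → ∞, to |tr(p₁·q₁) · tr(p₃·q₃)|, and this limit is nonzero. -/

import Mathlib

open scoped BigOperators

/-- The spectral radius of a real `d × d` matrix: the maximum of the absolute values of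
its complex eigenvalues, i.e. `λ₁(C)`. -/
noncomputable def specRad {d : ℕ} (C : Matrix (Fin d) (Fin d) ℝ) : ℝ :=
  (spectralRadius ℂ (C.map (Complex.ofReal))).toReal

/-- `λ_d(C) = λ₁(C⁻¹)⁻¹`, the smallest absolute value of a complex eigenvalue of an
invertible matrix `C`. -/
noncomputable def lamLast {d : ℕ} (C : Matrix (Fin d) (Fin d) ℝ) : ℝ :=
  (specRad C⁻¹)⁻¹

/-- A proximal decomposition `A = L₁ p₁ + ⋯ + L_d p_d` of a `d × d` real matrix:
`|L₁| > |L₂| > ⋯ > |L_d| > 0` and the `pᵢ` are rank-one projections with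
`pᵢ pⱼ = 0` for `i ≠ j`, `pᵢ² = pᵢ` and `p₁ + ⋯ + p_d = 1`. -/
structure ProximalDecomp {d : ℕ} (A : Matrix (Fin d) (Fin d) ℝ) where
  L : Fin d → ℝ
  p : Fin d → Matrix (Fin d) (Fin d) ℝ
  strictAnti : StrictAnti fun i => |L i|
  abs_pos : ∀ i, 0 < |L i|
  rank_one : ∀ i, (p i).rank = 1
  mul_eq_zero : ∀ i j, i ≠ j → p i * p j = 0
  idem : ∀ i, p i * p i = p i
  sum_eq_one : ∑ i, p i = 1
  decomp : A = ∑ i, L i • p i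

section SpecRad

open Filter Topology

attribute [local instance] Matrix.linftyOpNormedRing Matrix.linftyOpNormedAlgebra

variable {d : ℕ}

theorem isGreatest_specRad [NeZero d] (C : Matrix (Fin d) (Fin d) ℝ) :
    IsGreatest (norm '' spectrum ℂ (C.map Complex.ofReal)) (specRad C) := by
  obtain ⟨z, hz, hzr⟩ := spectrum.exists_nnnorm_eq_spectralRadius (C.map Complex.ofReal)
  have hr : specRad C = ‖z‖ := by simp [specRad, ← hzr]
  refine ⟨⟨z, hz, hr.symm⟩, ?_⟩
  rintro _ ⟨w, hw, rfl⟩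
  have hle : (‖w‖₊ : ENNReal) ≤ ‖z‖₊ := by
    rw [hzr]
    exact le_iSup₂ (f := fun k (_ : k ∈ spectrum ℂ (C.map Complex.ofReal)) => (‖k‖₊ : ENNReal)) w hw
  rw [hr]
  exact_mod_cast hle

theorem specRad_nonneg (C : Matrix (Fin d) (Fin d) ℝ) : 0 ≤ specRad C :=
  ENNReal.toReal_nonneg

theorem specRad_pow [NeZero d] (C : Matrix (Fin d) (Fin d) ℝ) (k : ℕ) :
    specRad (C ^ k) = specRad C ^ k := by
  have hmap : (C ^ k).map Complex.ofReal = C.map Complex.ofReal ^ k :=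
    Matrix.map_pow C Complex.ofRealHom k
  refine (isGreatest_specRad (C ^ k)).unique ?_
  rw [hmap, spectrum.map_pow_of_nonempty (spectrum.nonempty _)]
  obtain ⟨⟨z, hz, hzr⟩, hub⟩ := isGreatest_specRad C
  refine ⟨⟨z ^ k, ⟨z, hz, rfl⟩, by rw [norm_pow, hzr]⟩, ?_⟩
  rintro _ ⟨_, ⟨w, hw, rfl⟩, rfl⟩
  rw [norm_pow]
  exact pow_le_pow_left₀ (norm_nonneg _) (hub ⟨w, hw, rfl⟩) k

theorem specRad_smul [NeZero d] (c : ℝ) (C : Matrix (Fin d) (Fin d) ℝ) :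
    specRad (c • C) = |c| * specRad C := by
  have hmap : (c • C).map Complex.ofReal = (c : ℂ) • C.map Complex.ofReal := by
    ext i j
    simp
  refine (isGreatest_specRad (c • C)).unique ?_
  rw [hmap, spectrum.smul_eq_smul _ _ (spectrum.nonempty _)]
  obtain ⟨⟨z, hz, hzr⟩, hub⟩ := isGreatest_specRad C
  refine ⟨⟨c • z, ⟨z, hz, by simp⟩, by simp [hzr]⟩, ?_⟩
  rintro _ ⟨_, ⟨w, hw, rfl⟩, rfl⟩
  simpa using mul_le_mul_of_nonneg_left (hub ⟨w, hw, rfl⟩) (abs_nonneg c)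

theorem abs_trace_le_mul_specRad [NeZero d] (C : Matrix (Fin d) (Fin d) ℝ) :
    |C.trace| ≤ d * specRad C := by
  set M := C.map Complex.ofReal with hM
  have htr : ((C.trace : ℝ) : ℂ) = M.charpoly.roots.sum := by
    rw [← Matrix.trace_eq_sum_roots_charpoly]
    simp [Matrix.trace, hM]
  have hroot : ∀ z ∈ M.charpoly.roots, ‖z‖ ≤ specRad C := fun z hz =>
    (isGreatest_specRad C).2
      ⟨z, Matrix.mem_spectrum_of_isRoot_charpoly (Polynomial.isRoot_of_mem_roots hz), rfl⟩
  have hcard : M.charpoly.roots.card = d := by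
    rw [← (IsAlgClosed.splits M.charpoly).natDegree_eq_card_roots, Matrix.charpoly_natDegree_eq_dim,
      Fintype.card_fin]
  calc |C.trace| = ‖M.charpoly.roots.sum‖ := by rw [← htr, Complex.norm_real, Real.norm_eq_abs]
    _ ≤ (M.charpoly.roots.map norm).sum := norm_multiset_sum_le _
    _ ≤ (M.charpoly.roots.map norm).card • specRad C :=
        Multiset.sum_le_card_nsmul _ _ (Multiset.forall_mem_map_iff.2 hroot)
    _ = d * specRad C := by rw [Multiset.card_map, hcard, nsmul_eq_mul]

theorem specRad_le_norm [NeZero d] (C : Matrix (Fin d) (Fin d) ℝ) : specRad C ≤ ‖C‖ := by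
  obtain ⟨⟨z, hz, hzr⟩, -⟩ := isGreatest_specRad C
  have hnorm : ‖C.map Complex.ofReal‖ = ‖C‖ := by
    simp [Matrix.linfty_opNorm_def]
  rw [← hzr, ← hnorm]
  exact spectrum.norm_le_norm_of_mem hz

theorem exists_mul_pow_lt_pow {x y : ℝ} (K : ℝ) (hx : 0 ≤ x) (hxy : x < y) :
    ∃ k : ℕ, K * x ^ k < y ^ k := by
  have hy : 0 < y := hx.trans_lt hxy
  have hlim : Tendsto (fun k : ℕ => K * (x / y) ^ k) atTop (𝓝 (K * 0)) :=
    (tendsto_pow_atTop_nhds_zero_of_lt_one (div_nonneg hx hy.le)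
      ((div_lt_one hy).2 hxy)).const_mul K
  rw [mul_zero] at hlim
  obtain ⟨k, hk⟩ := (hlim.eventually_lt_const one_pos).exists
  refine ⟨k, ?_⟩
  rwa [div_pow, ← mul_div_assoc, div_lt_one (pow_pos hy k)] at hk

/-- The spectral radius is continuous at every matrix satisfying `C * C = tr C • C`. -/
theorem tendsto_specRad_of_mul_self [NeZero d] {ι : Type*} {l : Filter ι}
    {F : ι → Matrix (Fin d) (Fin d) ℝ} {C : Matrix (Fin d) (Fin d) ℝ}
    (hC : C * C = C.trace • C) (hF : Tendsto F l (𝓝 C)) :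
    Tendsto (fun n => specRad (F n)) l (𝓝 |C.trace|) := by
  have hpow : ∀ k : ℕ, C ^ (k + 1) = C.trace ^ k • C := by
    intro k
    induction k with
    | zero => simp
    | succ k ih => rw [pow_succ, ih, smul_mul_assoc, hC, smul_smul, ← pow_succ]
  have hlim : ∀ k : ℕ, Tendsto (fun n => F n ^ (k + 1)) l (𝓝 (C.trace ^ k • C)) := fun k => by
    rw [← hpow]
    exact hF.pow _
  refine tendsto_order.2 ⟨fun a ha => ?_, fun a ha => ?_⟩
  · rcases lt_or_ge a 0 with ha0 | ha0
    · exact Eventually.of_forall fun n => ha0.trans_le (specRad_nonneg _)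
    obtain ⟨k, hk⟩ := exists_mul_pow_lt_pow (d * a / |C.trace|) ha0 ha
    have hpos : 0 < |C.trace| := ha0.trans_lt ha
    have hk' : d * a ^ (k + 1) < |(C.trace ^ k • C).trace| := by
      rw [Matrix.trace_smul, smul_eq_mul, abs_mul, abs_pow]
      calc d * a ^ (k + 1) = (d * a / |C.trace| * a ^ k) * |C.trace| := by
            rw [pow_succ]
            field_simp
        _ < _ := mul_lt_mul_of_pos_right hk hpos
    have htr : Tendsto (fun n => |(F n ^ (k + 1)).trace|) l (𝓝 |(C.trace ^ k • C).trace|) :=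
      (((continuous_id.matrix_trace).tendsto _).comp (hlim k)).abs
    filter_upwards [htr.eventually_const_lt hk'] with n hn
    have h := hn.trans_le (abs_trace_le_mul_specRad _)
    rw [specRad_pow] at h
    exact lt_of_pow_lt_pow_left₀ _ (specRad_nonneg _) (lt_of_mul_lt_mul_left h d.cast_nonneg)
  · have ha0 : 0 < a := (abs_nonneg _).trans_lt ha
    obtain ⟨k, hk⟩ := exists_mul_pow_lt_pow (‖C‖ / a) (abs_nonneg _) ha
    have hk' : ‖C.trace ^ k • C‖ < a ^ (k + 1) := by
      rw [norm_smul, norm_pow, Real.norm_eq_abs]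
      calc |C.trace| ^ k * ‖C‖ = (‖C‖ / a * |C.trace| ^ k) * a := by field_simp
        _ < _ := mul_lt_mul_of_pos_right hk ha0
    filter_upwards [(hlim k).norm.eventually_lt_const hk'] with n hn
    have h := (specRad_le_norm _).trans_lt hn
    rw [specRad_pow] at h
    exact lt_of_pow_lt_pow_left₀ _ ha0.le h

end SpecRad

theorem Matrix.exists_eq_vecMulVec_of_rank_le_one {K m n : Type*} [Field K] [Fintype n]
    [DecidableEq n] [Finite m] {P : Matrix m n K} (hP : P.rank ≤ 1) :
    ∃ (u : m → K) (v : n → K), P = Matrix.vecMulVec u v := by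
  have := Fintype.ofFinite m
  obtain ⟨⟨u, hu⟩⟩ := (Submodule.finrank_le_one_iff_isPrincipal _).1 hP
  have hcol : ∀ j, ∃ c : K, c • u = P.col j := fun j => by
    rw [← Submodule.mem_span_singleton, ← hu]
    exact ⟨Pi.single j 1, by simp⟩
  choose v hv using hcol
  refine ⟨u, v, ?_⟩
  ext i j
  simpa [Matrix.vecMulVec_apply, mul_comm] using (congrFun (hv j) i).symm

theorem Matrix.mul_self_eq_trace_smul_of_rank_le_one {K n : Type*} [Field K] [Fintype n]
    [DecidableEq n] {P : Matrix n n K} (hP : P.rank ≤ 1) : P * P = P.trace • P := by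
  obtain ⟨u, v, rfl⟩ := Matrix.exists_eq_vecMulVec_of_rank_le_one hP
  rw [Matrix.vecMulVec_mul_vecMulVec, Matrix.trace_vecMulVec, dotProduct_comm,
    Matrix.vecMulVec_smul]

namespace ProximalDecomp

open Filter Topology

variable {d : ℕ} {A B : Matrix (Fin d) (Fin d) ℝ}

theorem L_ne_zero (D : ProximalDecomp A) (i : Fin d) : D.L i ≠ 0 :=
  _root_.abs_pos.1 (D.abs_pos i)

theorem p_ne_zero (D : ProximalDecomp A) (i : Fin d) : D.p i ≠ 0 := fun h => by
  simpa [h] using D.rank_one i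

theorem trace_p (D : ProximalDecomp A) (i : Fin d) : (D.p i).trace = 1 := by
  have h := Matrix.mul_self_eq_trace_smul_of_rank_le_one (D.rank_one i).le
  rw [D.idem] at h
  exact smul_left_injective ℝ (D.p_ne_zero i) (by simpa using h.symm)

theorem sum_smul_mul_sum_smul (D : ProximalDecomp A) (a b : Fin d → ℝ) :
    (∑ i, a i • D.p i) * ∑ i, b i • D.p i = ∑ i, (a i * b i) • D.p i := by
  rw [Finset.sum_mul_sum]
  refine Finset.sum_congr rfl fun i _ => ?_
  rw [Finset.sum_eq_single i, smul_mul_smul_comm, D.idem]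
  · intro j _ hj
    rw [smul_mul_smul_comm, D.mul_eq_zero i j hj.symm, smul_zero]
  · simp

theorem pow_eq (D : ProximalDecomp A) (n : ℕ) : A ^ n = ∑ i, D.L i ^ n • D.p i := by
  induction n with
  | zero => simp [D.sum_eq_one]
  | succ n ih =>
    calc A ^ (n + 1) = (∑ i, D.L i ^ n • D.p i) * ∑ i, D.L i • D.p i := by
          rw [pow_succ, ih, ← D.decomp]
      _ = _ := by simp only [D.sum_smul_mul_sum_smul, ← pow_succ]

theorem inv_eq (D : ProximalDecomp A) : A⁻¹ = ∑ i, (D.L i)⁻¹ • D.p i := by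
  refine Matrix.inv_eq_right_inv ?_
  calc A * ∑ i, (D.L i)⁻¹ • D.p i = (∑ i, D.L i • D.p i) * ∑ i, (D.L i)⁻¹ • D.p i := by
        rw [← D.decomp]
    _ = 1 := by simp [D.sum_smul_mul_sum_smul, D.L_ne_zero, D.sum_eq_one]

/-- The proximal decomposition of the inverse, with the indices reversed. -/
noncomputable def inv (D : ProximalDecomp A) : ProximalDecomp A⁻¹ where
  L i := (D.L i.rev)⁻¹
  p i := D.p i.rev
  strictAnti i j hij := by
    simp only [abs_inv]
    exact inv_strictAnti₀ (D.abs_pos _) (D.strictAnti (Fin.rev_lt_rev.2 hij))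
  abs_pos i := by simp [D.L_ne_zero]
  rank_one i := D.rank_one _
  mul_eq_zero i j hij := D.mul_eq_zero _ _ (Fin.rev_injective.ne hij)
  idem i := D.idem _
  sum_eq_one := by rw [← D.sum_eq_one]; exact Equiv.sum_comp Fin.revPerm D.p
  decomp := by
    rw [D.inv_eq]
    exact (Equiv.sum_comp Fin.revPerm fun i => (D.L i)⁻¹ • D.p i).symm

variable [NeZero d]

theorem tendsto_smul_pow (D : ProximalDecomp A) :
    Tendsto (fun n : ℕ => (D.L 0 ^ n)⁻¹ • A ^ n) atTop (𝓝 (D.p 0)) := by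
  have hterm : ∀ i, Tendsto (fun n : ℕ => (D.L i / D.L 0) ^ n • D.p i) atTop
      (𝓝 (if i = 0 then D.p i else 0)) := by
    intro i
    split_ifs with hi
    · subst hi
      simp [D.L_ne_zero]
    · have hlt : |D.L i / D.L 0| < 1 := by
        rw [abs_div, div_lt_one (D.abs_pos 0)]
        exact D.strictAnti (Fin.pos_iff_ne_zero.2 hi)
      simpa using (tendsto_pow_atTop_nhds_zero_of_abs_lt_one hlt).smul_const (D.p i)
  have hsum := tendsto_finsetSum Finset.univ fun i _ => hterm i
  rw [Finset.sum_ite_eq' Finset.univ, if_pos (Finset.mem_univ _)] at hsum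
  refine hsum.congr fun n => ?_
  rw [D.pow_eq, Finset.smul_sum]
  refine Finset.sum_congr rfl fun i _ => ?_
  rw [smul_smul, div_pow, div_eq_inv_mul]

theorem tendsto_specRad_pow (D : ProximalDecomp A) :
    Tendsto (fun n : ℕ => (|D.L 0| ^ n)⁻¹ * specRad (A ^ n)) atTop (𝓝 1) := by
  have h := tendsto_specRad_of_mul_self
    (Matrix.mul_self_eq_trace_smul_of_rank_le_one (D.rank_one 0).le) D.tendsto_smul_pow
  simpa only [specRad_smul, abs_inv, abs_pow, D.trace_p, abs_one] using h

theorem tendsto_specRad_pow_mul_pow (D : ProximalDecomp A) (E : ProximalDecomp B) :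
    Tendsto (fun n : ℕ => (|D.L 0| ^ n)⁻¹ * (|E.L 0| ^ n)⁻¹ * specRad (A ^ n * B ^ n)) atTop
      (𝓝 |(D.p 0 * E.p 0).trace|) := by
  have hrank : (D.p 0 * E.p 0).rank ≤ 1 :=
    (Matrix.rank_mul_le_left _ _).trans (D.rank_one 0).le
  have h := tendsto_specRad_of_mul_self (Matrix.mul_self_eq_trace_smul_of_rank_le_one hrank)
    (D.tendsto_smul_pow.mul E.tendsto_smul_pow)
  simpa only [smul_mul_smul_comm, specRad_smul, abs_inv, abs_pow, abs_mul] using h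

end ProximalDecomp

open Filter in
/-- For invertible `3 × 3` real matrices `A`, `B` with proximal decompositions such that
`tr (p₁ q₁) ≠ 0` and `tr (p₃ q₃) ≠ 0`, the sequence
`(λ₁(AⁿBⁿ)/λ₃(AⁿBⁿ)) ⬝ (λ₃(Aⁿ)/λ₁(Aⁿ)) ⬝ (λ₃(Bⁿ)/λ₁(Bⁿ))` converges to
`|tr (p₁ q₁) ⬝ tr (p₃ q₃)|`, which is nonzero. -/
theorem hilbert_trace_identity
    (A B : Matrix (Fin 3) (Fin 3) ℝ) (hA : IsUnit A) (hB : IsUnit B)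
    (DA : ProximalDecomp A) (DB : ProximalDecomp B)
    (h1 : (DA.p 0 * DB.p 0).trace ≠ 0)
    (h3 : (DA.p 2 * DB.p 2).trace ≠ 0) :
    Tendsto (fun n : ℕ =>
        specRad (A ^ n * B ^ n) / lamLast (A ^ n * B ^ n) *
          (lamLast (A ^ n) / specRad (A ^ n)) *
          (lamLast (B ^ n) / specRad (B ^ n))) atTop
      (nhds |(DA.p 0 * DB.p 0).trace * (DA.p 2 * DB.p 2).trace|) ∧
    |(DA.p 0 * DB.p 0).trace * (DA.p 2 * DB.p 2).trace| ≠ 0 := by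
  refine ⟨?_, abs_ne_zero.2 (mul_ne_zero h1 h3)⟩
  have hlim := ((DA.tendsto_specRad_pow_mul_pow DB).mul
    (DB.inv.tendsto_specRad_pow_mul_pow DA.inv)).div
    ((DA.tendsto_specRad_pow.mul DA.inv.tendsto_specRad_pow).mul
      (DB.tendsto_specRad_pow.mul DB.inv.tendsto_specRad_pow)) (by norm_num)
  have htrace : (DB.inv.p 0 * DA.inv.p 0).trace = (DA.p 2 * DB.p 2).trace :=
    Matrix.trace_mul_comm _ _
  rw [htrace, ← abs_mul, mul_one, mul_one, div_one] at hlim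
  refine hlim.congr fun n => ?_
  have hAL := (pow_pos (DA.abs_pos 0) n).ne'
  have hBL := (pow_pos (DB.abs_pos 0) n).ne'
  have hAL' := (pow_pos (DA.inv.abs_pos 0) n).ne'
  have hBL' := (pow_pos (DB.inv.abs_pos 0) n).ne'
  simp only [lamLast, Matrix.mul_inv_rev, Matrix.inv_pow', Pi.div_apply]
  field_simp
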